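/- Let f be a cellular automaton on A^ℤ such that ω̃(f) has exactly k σ±-chain components X_1, …, X_k (k finite). Then there is a cyclic permutation ρ of {1, …, k} such that f(X_i) = X_{ρ(i)} for each i = 1, …, k. -/

import Mathlib

open Filter Set Function

namespace Gls

variable {A : Type*}

/-- The left shift map on `A^ℤ`. -/
def shift (x : ℤ → A) : ℤ → A := fun i => x (i + 1)

/-- A cellular automaton: a continuous shift-commuting self-map of the full shift. -/
def IsCA [TopologicalSpace A] (f : (ℤ → A) → (ℤ → A)) : Prop :=
  Continuous f ∧ f ∘ shift = shift ∘ f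

/-- The set of limit points of the forward orbit of `x` under `f`. -/
def omegaSet [TopologicalSpace A] (f : (ℤ → A) → (ℤ → A)) (x : ℤ → A) : Set (ℤ → A) :=
  {y | MapClusterPt y atTop fun t => f^[t] x}

/-- The realm of attraction of `Y`. -/
def realm [TopologicalSpace A] (f : (ℤ → A) → (ℤ → A)) (Y : Set (ℤ → A)) : Set (ℤ → A) :=
  {x | omegaSet f x ⊆ Y}

/-- The generic limit set: the intersection of all closed sets whose realm is comeager. -/
def genLimitSet [TopologicalSpace A] (f : (ℤ → A) → (ℤ → A)) : Set (ℤ → A) :=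
  ⋂₀ {C | IsClosed C ∧ realm f C ∈ residual (ℤ → A)}

/-- The word `x_{[i, i+n)}` of length `n` read in the configuration `x` from position `i`. -/
def word (x : ℤ → A) (i : ℤ) (n : ℕ) : List A :=
  (List.range n).map fun k => x (i + k)

/-- The cylinder set `[w]_i`. -/
def cylinder (w : List A) (i : ℤ) : Set (ℤ → A) := {x | word x i w.length = w}

/-- The language of `X`: all finite words occurring in points of `X`. -/
def lang (X : Set (ℤ → A)) : Set (List A) :=
  {w | ∃ x ∈ X, ∃ i : ℤ, word x i w.length = w}


/-- A subshift: a closed shift-invariant set. -/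
def IsSubshift {A : Type*} [TopologicalSpace A] (X : Set (ℤ → A)) : Prop :=
  IsClosed X ∧ shift '' X = X

/-- The chain relation: `u ∼ v` iff they have the same length `n` and there are `x ∈ X`
and `k ≥ 0` with `x_{[0,n)} = u` and `x_{[k,k+n)} = v`. -/
def chainRel {A : Type*} (X : Set (ℤ → A)) (u v : List A) : Prop :=
  u.length = v.length ∧ ∃ x ∈ X, ∃ k : ℕ,
    word x 0 u.length = u ∧ word x (k : ℤ) u.length = v

/-- `X` is `σ±`-chain transitive if for every `n`, the symmetric-transitive closure of the
width-`n` chain relation relates every pair of words in `L_n(X)`. -/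
def ChainTransPM {A : Type*} (X : Set (ℤ → A)) : Prop :=
  ∀ u ∈ lang X, ∀ v ∈ lang X, u.length = v.length → Relation.EqvGen (chainRel X) u v

/-- `Y` is a `σ±`-chain component of `X`: a maximal `σ±`-chain transitive subshift
contained in `X`. -/
def IsChainComponent {A : Type*} [TopologicalSpace A] (X Y : Set (ℤ → A)) : Prop :=
  IsSubshift Y ∧ Y ⊆ X ∧ ChainTransPM Y ∧
    ∀ Z : Set (ℤ → A), IsSubshift Z → Z ⊆ X → ChainTransPM Z → Y ⊆ Z → Z = Y

/-!
A subshift is `σ±`-chain transitive exactly when it is not a disjoint union of two nonempty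
subshifts, that is, when its image in the space of shift orbits is connected. So the chain
components of `ω̃(f)` are the pullbacks of the connected components of its orbit space, and since
`f` preserves connectedness and maps `ω̃(f)` onto itself, it permutes them as soon as there are
finitely many.

If the permutation had more than one cycle, then `ω̃(f)` would split into two nonempty disjoint
`f`-invariant subshifts `P` and `Q`. An orbit accumulating only on `P ∪ Q` cannot jump forever
between neighbourhoods of `P` and `Q`, so a generic `ω`-limit set lies inside `P` or inside `Q`. The
realm of `P` is shift-invariant and has the property of Baire, hence is meagre or comeager because
the shift is topologically transitive; thus one of `P` and `Q` already contains `ω̃(f)`.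
-/

section Words

/-- The translation `x ↦ (x_{j+n})_j` of configurations by `n ∈ ℤ`, that is, the `n`-th power of the
shift, as a self-homeomorphism of the full shift. -/
def translate [TopologicalSpace A] (n : ℤ) : (ℤ → A) ≃ₜ (ℤ → A) where
  toFun x j := x (j + n)
  invFun x j := x (j - n)
  left_inv x := by simp
  right_inv x := by simp

theorem shift_iterate_apply (n : ℕ) (x : ℤ → A) (j : ℤ) : shift^[n] x j = x (j + n) := by
  induction n generalizing j with
  | zero => simp
  | succ n ih => rw [iterate_succ_apply', shift, ih]; congr 1; push_cast; ring

-- In the definition of `word`, the list of positions is coerced to a `List ℤ` before being mapped.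
theorem word_eq_ofFn (x : ℤ → A) (i : ℤ) (n : ℕ) :
    word x i n = List.ofFn fun k : Fin n => x (i + k) := by
  simp [word, List.ofFn_eq_map, ← List.map_coe_finRange_eq_range, List.map_eq_flatMap,
    List.flatMap_assoc]

theorem length_word (x : ℤ → A) (i : ℤ) (n : ℕ) : (word x i n).length = n := by
  rw [word_eq_ofFn, List.length_ofFn]

theorem word_eq_word_iff {x y : ℤ → A} {i j : ℤ} {n : ℕ} :
    word x i n = word y j n ↔ ∀ k < n, x (i + k) = y (j + k) := by
  simp only [word_eq_ofFn, List.ofFn_inj, funext_iff, Fin.forall_iff]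

theorem word_shift (x : ℤ → A) (i : ℤ) (n : ℕ) : word (shift x) i n = word x (i + 1) n :=
  word_eq_word_iff.2 fun k _ => congrArg x (by ring)

theorem mem_lang_of_word_eq {X : Set (ℤ → A)} {x : ℤ → A} (hx : x ∈ X) {i : ℤ} {n : ℕ} {w : List A}
    (h : word x i n = w) : w ∈ lang X :=
  ⟨x, hx, i, by rw [← h, length_word]⟩

theorem chainRel_word_shift {X : Set (ℤ → A)} {x : ℤ → A} (hx : x ∈ X) (n : ℕ) :
    chainRel X (word x 0 n) (word (shift x) 0 n) := by
  refine ⟨by simp only [length_word], x, hx, 1, ?_⟩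
  simp only [length_word, word_shift, zero_add, Nat.cast_one, and_self]

theorem chainRel_union {Y Z : Set (ℤ → A)} {u v : List A} (h : chainRel (Y ∪ Z) u v) :
    chainRel Y u v ∨ chainRel Z u v := by
  obtain ⟨hl, x, hx | hx, hk⟩ := h
  · exact Or.inl ⟨hl, x, hx, hk⟩
  · exact Or.inr ⟨hl, x, hx, hk⟩

theorem chainRel.mem_lang {X : Set (ℤ → A)} {u v : List A} (h : chainRel X u v) :
    u ∈ lang X ∧ v ∈ lang X := by
  obtain ⟨-, x, hx, k, hu, hv⟩ := h
  exact ⟨mem_lang_of_word_eq hx hu, mem_lang_of_word_eq hx hv⟩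

variable [TopologicalSpace A]

theorem translate_apply (n : ℤ) (x : ℤ → A) (j : ℤ) : translate n x j = x (j + n) := rfl

theorem shift_translate (n : ℤ) (x : ℤ → A) : shift (translate n x) = translate (n + 1) x := by
  funext j
  simp only [shift, translate_apply, add_assoc, add_comm 1 n]

theorem word_translate (m : ℤ) (x : ℤ → A) (i : ℤ) (n : ℕ) :
    word (translate m x) i n = word x (i + m) n :=
  word_eq_word_iff.2 fun k _ => congrArg x (by ring)

theorem isClosed_setOf_word [DiscreteTopology A] (p : List A → Prop) (i : ℤ) (n : ℕ) :
    IsClosed {x : ℤ → A | p (word x i n)} := by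
  have hc : Continuous fun (x : ℤ → A) (k : Fin n) => x (i + k) := by fun_prop
  simp only [word_eq_ofFn]
  exact (isClosed_discrete {w : Fin n → A | p (List.ofFn w)}).preimage hc

theorem exists_window_subset {x : ℤ → A} {U : Set (ℤ → A)} (hU : IsOpen U) (hx : x ∈ U) :
    ∃ n : ℕ, ∀ y : ℤ → A, (∀ i : ℤ, -n ≤ i → i < n → y i = x i) → y ∈ U := by
  obtain ⟨I, V, hV, hIV⟩ := isOpen_pi_iff.1 hU x hx
  refine ⟨I.sup Int.natAbs + 1, fun y hy => hIV fun i hi => ?_⟩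
  have hi' : i.natAbs ≤ I.sup Int.natAbs := Finset.le_sup (f := Int.natAbs) hi
  rw [hy i (by omega) (by omega)]
  exact (hV i hi).2

theorem exists_shift_iterate_inter_nonempty {U V : Set (ℤ → A)} (hU : IsOpen U) (hV : IsOpen V)
    (hUne : U.Nonempty) (hVne : V.Nonempty) : ∃ n : ℕ, (U ∩ shift^[n] ⁻¹' V).Nonempty := by
  obtain ⟨x, hx⟩ := hUne
  obtain ⟨y, hy⟩ := hVne
  obtain ⟨n, hn⟩ := exists_window_subset hU hx
  obtain ⟨m, hm⟩ := exists_window_subset hV hy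
  refine ⟨n + m, fun i => if i < n then x i else y (i - (n + m)), ?_, ?_⟩
  · exact hn _ fun i _ hi => if_pos hi
  · refine hm _ fun i hi _ => ?_
    rw [shift_iterate_apply, if_neg (by omega)]
    congr 1; push_cast; ring

end Words

section Subshifts

variable [TopologicalSpace A] {X Y Z : Set (ℤ → A)} {f : (ℤ → A) → (ℤ → A)}

theorem isSubshift_iff : IsSubshift X ↔ IsClosed X ∧ ∀ x, shift x ∈ X ↔ x ∈ X := by
  refine and_congr_right fun _ => ?_
  change (translate 1).toEquiv '' X = X ↔ _
  rw [← Equiv.eq_preimage_iff_image_eq, Set.ext_iff]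
  exact forall_congr' fun _ => Iff.comm

theorem IsSubshift.shift_mem_iff (hX : IsSubshift X) {x : ℤ → A} : shift x ∈ X ↔ x ∈ X :=
  (isSubshift_iff.1 hX).2 x

theorem IsSubshift.translate_mem_iff (hX : IsSubshift X) (n : ℤ) {x : ℤ → A} :
    translate n x ∈ X ↔ x ∈ X := by
  induction n with
  | zero => exact iff_of_eq (congrArg (· ∈ X) (funext fun j => congrArg x (add_zero j)))
  | succ n ih => rw [← shift_translate, hX.shift_mem_iff, ih]
  | pred n ih => rw [← hX.shift_mem_iff, shift_translate, sub_add_cancel, ih]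

theorem IsSubshift.exists_mem_word_eq (hX : IsSubshift X) {w : List A} (hw : w ∈ lang X) (i : ℤ) :
    ∃ x ∈ X, word x i w.length = w := by
  obtain ⟨x, hx, j, hj⟩ := hw
  refine ⟨translate (j - i) x, (hX.translate_mem_iff _).2 hx, ?_⟩
  rwa [word_translate, add_sub_cancel]

theorem IsSubshift.inter (hX : IsSubshift X) (hY : IsSubshift Y) : IsSubshift (X ∩ Y) :=
  isSubshift_iff.2 ⟨hX.1.inter hY.1, fun _ => and_congr hX.shift_mem_iff hY.shift_mem_iff⟩

theorem IsSubshift.biUnion {ι : Type*} {s : Set ι} (hs : s.Finite) {X : ι → Set (ℤ → A)}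
    (hX : ∀ i ∈ s, IsSubshift (X i)) : IsSubshift (⋃ i ∈ s, X i) := by
  refine isSubshift_iff.2 ⟨hs.isClosed_biUnion fun i hi => (hX i hi).1, fun x => ?_⟩
  simp only [mem_iUnion₂]
  exact exists₂_congr fun i hi => (hX i hi).shift_mem_iff

theorem IsCA.commute_shift (hf : IsCA f) : Function.Commute f shift := congrFun hf.2

theorem IsSubshift.preimage (hX : IsSubshift X) (hf : IsCA f) : IsSubshift (f ⁻¹' X) :=
  isSubshift_iff.2 ⟨hX.1.preimage hf.1, fun x => by
    rw [mem_preimage, hf.commute_shift x, hX.shift_mem_iff, mem_preimage]⟩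

theorem IsSubshift.image [CompactSpace A] [T2Space A] (hX : IsSubshift X) (hf : IsCA f) :
    IsSubshift (f '' X) :=
  ⟨(hX.1.isCompact.image hf.1).isClosed, by rw [← hf.commute_shift.set_image, hX.2]⟩

theorem exists_forall_lang_disjoint [CompactSpace A] [T2Space A] (hY : IsSubshift Y)
    (hZ : IsSubshift Z) (hYZ : Disjoint Y Z) : ∃ n, ∀ w ∈ lang Y, w.length = n → w ∉ lang Z := by
  by_contra! h
  let K (n : ℕ) : Set ((ℤ → A) × (ℤ → A)) :=
    Y ×ˢ Z ∩ {p | ∀ i : ℤ, -n ≤ i → i < n → p.1 i = p.2 i}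
  have hK_closed (n : ℕ) : IsClosed (K n) := by
    refine (hY.1.prod hZ.1).inter ?_
    simp only [ofPred_forall]
    exact isClosed_iInter fun i => isClosed_iInter fun _ => isClosed_iInter fun _ =>
      isClosed_eq (by fun_prop) (by fun_prop)
  have hK_anti (n : ℕ) : K (n + 1) ⊆ K n := fun p hp =>
    ⟨hp.1, fun i hi hi' => hp.2 i (by omega) (by omega)⟩
  have hK_nonempty (n : ℕ) : (K n).Nonempty := by
    obtain ⟨w, hwY, hwn, hwZ⟩ := h (2 * n)
    obtain ⟨y, hy, hyw⟩ := hY.exists_mem_word_eq hwY (-n)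
    obtain ⟨z, hz, hzw⟩ := hZ.exists_mem_word_eq hwZ (-n)
    refine ⟨(y, z), ⟨hy, hz⟩, fun i hi hi' => ?_⟩
    have := word_eq_word_iff.1 (hyw.trans hzw.symm) (i + n).toNat (by omega)
    rwa [Int.toNat_of_nonneg (by omega), neg_add_cancel_comm_assoc] at this
  obtain ⟨⟨y, z⟩, hp⟩ := IsCompact.nonempty_iInter_of_sequence_nonempty_isCompact_isClosed K hK_anti
    hK_nonempty (hK_closed 0).isCompact hK_closed
  rw [mem_iInter] at hp
  have hyz : y = z := funext fun i => (hp (i.natAbs + 1)).2 i (by omega) (by omega)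
  exact disjoint_left.1 hYZ (hp 0).1.1 (hyz ▸ (hp 0).1.2)

end Subshifts

section Indecomposable

variable [TopologicalSpace A] {X Y Z : Set (ℤ → A)} {f : (ℤ → A) → (ℤ → A)}

/-- A set of configurations is indecomposable if it is not the disjoint union of two nonempty
subshifts. For subshifts this is the form of `σ±`-chain transitivity that makes no reference to
words. -/
def IsIndecomposable (X : Set (ℤ → A)) : Prop :=
  ∀ Y Z, IsSubshift Y → IsSubshift Z → Disjoint Y Z → X = Y ∪ Z → Y = ∅ ∨ Z = ∅

theorem ChainTransPM.isIndecomposable [CompactSpace A] [T2Space A] (h : ChainTransPM X) :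
    IsIndecomposable X := by
  rintro Y Z hY hZ hYZ rfl
  by_contra! hne
  obtain ⟨⟨y, hy⟩, z, hz⟩ := hne
  obtain ⟨n, hn⟩ := exists_forall_lang_disjoint hY hZ hYZ
  have hrel (u v : List A) (huv : chainRel (Y ∪ Z) u v) :
      u ∈ lang Y ∧ u.length = n ↔ v ∈ lang Y ∧ v.length = n := by
    rw [huv.1]
    refine and_congr_left fun hv => ?_
    rcases chainRel_union huv with huv | huv
    · exact iff_of_true huv.mem_lang.1 huv.mem_lang.2
    · exact iff_of_false (fun hu => hn u hu (huv.1.trans hv) huv.mem_lang.1)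
        (fun hv' => hn v hv' hv huv.mem_lang.2)
  have hchain : Relation.EqvGen (chainRel (Y ∪ Z)) (word y 0 n) (word z 0 n) :=
    h _ (mem_lang_of_word_eq (Or.inl hy) rfl) _ (mem_lang_of_word_eq (Or.inr hz) rfl)
      (by simp only [length_word])
  have hiff : word y 0 n ∈ lang Y ∧ _ ↔ word z 0 n ∈ lang Y ∧ _ :=
    iff_of_eq <| congrArg (Quot.lift _ fun u v huv => propext (hrel u v huv))
      (Quot.eqvGen_sound hchain)
  have hzY := (hiff.1 ⟨mem_lang_of_word_eq hy rfl, length_word ..⟩).1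
  exact hn _ hzY (length_word ..) (mem_lang_of_word_eq hz rfl)

theorem IsSubshift.sep_word [DiscreteTopology A] (hX : IsSubshift X) {p : List A → Prop} {n : ℕ}
    (hp : ∀ x ∈ X, p (word (shift x) 0 n) ↔ p (word x 0 n)) :
    IsSubshift {x ∈ X | p (word x 0 n)} := by
  refine isSubshift_iff.2 ⟨hX.1.inter (isClosed_setOf_word p 0 n), fun x => ?_⟩
  simp only [mem_ofPred_eq, hX.shift_mem_iff]
  exact and_congr_right (hp x)

theorem IsIndecomposable.chainTransPM [DiscreteTopology A] (hX : IsSubshift X)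
    (h : IsIndecomposable X) : ChainTransPM X := by
  intro u hu v hv huv
  by_contra hne
  let p : List A → Prop := Relation.EqvGen (chainRel X) u
  have hp (x) (hx : x ∈ X) : p (word (shift x) 0 u.length) ↔ p (word x 0 u.length) :=
    have hrel := Relation.EqvGen.rel _ _ (chainRel_word_shift hx u.length)
    ⟨fun hpx => hpx.trans _ _ _ hrel.symm, fun hpx => hpx.trans _ _ _ hrel⟩
  obtain ⟨x, hx, hxu⟩ := hX.exists_mem_word_eq hu 0
  obtain ⟨y, hy, hyv⟩ := hX.exists_mem_word_eq hv 0
  have hdisj : Disjoint {x ∈ X | p (word x 0 u.length)} {x ∈ X | ¬ p (word x 0 u.length)} :=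
    disjoint_left.2 fun z hz hz' => hz'.2 hz.2
  have hunion : X = {x ∈ X | p (word x 0 u.length)} ∪ {x ∈ X | ¬ p (word x 0 u.length)} := by
    simp only [← sep_or, em, sep_true]
  rcases h _ _ (hX.sep_word hp) (hX.sep_word (p := (¬ p ·)) fun x hx => not_congr (hp x hx))
    hdisj hunion with hempty | hempty
  · exact hempty.subset ⟨hx, by rw [hxu]; exact .refl u⟩
  · exact hempty.subset ⟨hy, by rwa [huv, hyv]⟩

theorem IsIndecomposable.image (hX : IsSubshift X) (h : IsIndecomposable X) (hf : IsCA f) :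
    IsIndecomposable (f '' X) := by
  intro Y Z hY hZ hYZ hXYZ
  have hunion : X = X ∩ f ⁻¹' Y ∪ X ∩ f ⁻¹' Z := by
    rw [← inter_union_distrib_left, ← preimage_union, ← hXYZ,
      inter_eq_left.2 (subset_preimage_image f X)]
  have hempty {W : Set (ℤ → A)} (hW : W ⊆ f '' X) (hXW : X ∩ f ⁻¹' W = ∅) : W = ∅ := by
    rw [← inter_eq_right.2 hW, ← image_inter_preimage, hXW, image_empty]
  exact (h _ _ (hX.inter (hY.preimage hf)) (hX.inter (hZ.preimage hf))
    ((hYZ.preimage f).mono inter_subset_right inter_subset_right) hunion).imp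
    (hempty (hXYZ ▸ subset_union_left)) (hempty (hXYZ ▸ subset_union_right))

theorem ChainTransPM.image [Finite A] [DiscreteTopology A] (hX : IsSubshift X) (h : ChainTransPM X)
    (hf : IsCA f) : ChainTransPM (f '' X) :=
  (h.isIndecomposable.image hX hf).chainTransPM (hX.image hf)

end Indecomposable

section ChainComponents

/-- The space of shift orbits of configurations, with the quotient topology. Its connected subsets
describe the `σ±`-chain transitive subshifts; it is not Hausdorff in general. -/
def OrbitSpace (A : Type*) : Type _ := Quot fun x y : ℤ → A => shift x = y

/-- The quotient map sending a configuration to its shift orbit. -/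
def toOrbit (x : ℤ → A) : OrbitSpace A := Quot.mk _ x

theorem toOrbit_shift (x : ℤ → A) : toOrbit (shift x) = toOrbit x :=
  (Quot.sound (r := fun x y : ℤ → A => shift x = y) rfl).symm

variable [TopologicalSpace A] {X Y Z : Set (ℤ → A)} {f : (ℤ → A) → (ℤ → A)}

instance : TopologicalSpace (OrbitSpace A) :=
  inferInstanceAs (TopologicalSpace (Quot fun x y : ℤ → A => shift x = y))

theorem isClosed_preimage_toOrbit {S : Set (OrbitSpace A)} :
    IsClosed (toOrbit ⁻¹' S) ↔ IsClosed S :=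
  isQuotientMap_quot_mk.isClosed_preimage

theorem isSubshift_preimage_toOrbit {S : Set (OrbitSpace A)} (hS : IsClosed S) :
    IsSubshift (toOrbit ⁻¹' S) :=
  isSubshift_iff.2 ⟨isClosed_preimage_toOrbit.2 hS, fun x => by
    rw [mem_preimage, toOrbit_shift, mem_preimage]⟩

theorem IsSubshift.toOrbit_mem_image_iff (hX : IsSubshift X) {x : ℤ → A} :
    toOrbit x ∈ toOrbit '' X ↔ x ∈ X := by
  refine ⟨fun ⟨y, hy, hyx⟩ => ?_, mem_image_of_mem _⟩
  have hlift := congrArg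
    (Quot.lift (· ∈ X) fun y z (hyz : shift y = z) => propext (hyz ▸ hX.shift_mem_iff.symm)) hyx
  exact hlift.mp hy

theorem IsSubshift.preimage_image_toOrbit (hX : IsSubshift X) : toOrbit ⁻¹' (toOrbit '' X) = X :=
  Set.ext fun _ => hX.toOrbit_mem_image_iff

theorem IsSubshift.isClosed_image_toOrbit (hX : IsSubshift X) : IsClosed (toOrbit '' X) := by
  rw [← isClosed_preimage_toOrbit, hX.preimage_image_toOrbit]
  exact hX.1

theorem IsSubshift.isIndecomposable_iff_isPreconnected (hX : IsSubshift X) :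
    IsIndecomposable X ↔ IsPreconnected (toOrbit '' X) := by
  rw [isPreconnected_closed_iff]
  constructor
  · rintro h S T hS hT hXST ⟨-, ⟨x, hx, rfl⟩, hxS⟩ ⟨-, ⟨y, hy, rfl⟩, hyT⟩
    by_contra hST
    have hdisj : Disjoint (X ∩ toOrbit ⁻¹' S) (X ∩ toOrbit ⁻¹' T) :=
      disjoint_left.2 fun z hzS hzT => hST ⟨_, mem_image_of_mem _ hzS.1, hzS.2, hzT.2⟩
    have hunion : X = X ∩ toOrbit ⁻¹' S ∪ X ∩ toOrbit ⁻¹' T := by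
      rw [← inter_union_distrib_left, ← preimage_union, eq_comm, inter_eq_left]
      exact image_subset_iff.1 hXST
    rcases h _ _ (hX.inter (isSubshift_preimage_toOrbit hS))
      (hX.inter (isSubshift_preimage_toOrbit hT)) hdisj hunion with hempty | hempty
    · exact hempty.subset ⟨hx, hxS⟩
    · exact hempty.subset ⟨hy, hyT⟩
  · rintro h Y Z hY hZ hYZ rfl
    by_contra! hne
    obtain ⟨-, -, ⟨z, hz, rfl⟩, hzZ⟩ := h _ _ hY.isClosed_image_toOrbit hZ.isClosed_image_toOrbit
      (image_union _ _ _).subset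
      ((hne.1.image toOrbit).mono (subset_inter (image_mono subset_union_left) subset_rfl))
      ((hne.2.image toOrbit).mono (subset_inter (image_mono subset_union_right) subset_rfl))
    exact disjoint_left.1 hYZ hz (hZ.toOrbit_mem_image_iff.1 hzZ)

/-- The `σ±`-chain component of the subshift `X` through its point `x`, obtained by pulling back a
connected component of the orbit space of `X`. -/
def chainComponentIn (X : Set (ℤ → A)) (x : ℤ → A) : Set (ℤ → A) :=
  toOrbit ⁻¹' connectedComponentIn (toOrbit '' X) (toOrbit x)

theorem mem_chainComponentIn {x : ℤ → A} (hx : x ∈ X) : x ∈ chainComponentIn X x :=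
  mem_connectedComponentIn (mem_image_of_mem _ hx)

theorem image_toOrbit_chainComponentIn (X : Set (ℤ → A)) (x : ℤ → A) :
    toOrbit '' chainComponentIn X x = connectedComponentIn (toOrbit '' X) (toOrbit x) :=
  image_preimage_eq _ Quot.mk_surjective

theorem IsSubshift.chainComponentIn_subset (hX : IsSubshift X) (x : ℤ → A) :
    chainComponentIn X x ⊆ X :=
  (preimage_mono (connectedComponentIn_subset _ _)).trans hX.preimage_image_toOrbit.subset

theorem IsSubshift.isSubshift_chainComponentIn (hX : IsSubshift X) {x : ℤ → A} (hx : x ∈ X) :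
    IsSubshift (chainComponentIn X x) := by
  refine isSubshift_preimage_toOrbit (isClosed_of_closure_subset ?_)
  exact isPreconnected_connectedComponentIn.closure.subset_connectedComponentIn
    (subset_closure (mem_chainComponentIn hx))
    (closure_minimal (connectedComponentIn_subset _ _) hX.isClosed_image_toOrbit)

variable [Finite A] [DiscreteTopology A]

theorem IsSubshift.chainTransPM_iff_isPreconnected (hX : IsSubshift X) :
    ChainTransPM X ↔ IsPreconnected (toOrbit '' X) := by
  rw [← hX.isIndecomposable_iff_isPreconnected]
  exact ⟨ChainTransPM.isIndecomposable, IsIndecomposable.chainTransPM hX⟩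

theorem ChainTransPM.subset_chainComponentIn (h : ChainTransPM Z) (hZ : IsSubshift Z) (hZX : Z ⊆ X)
    {x : ℤ → A} (hx : x ∈ Z) : Z ⊆ chainComponentIn X x :=
  image_subset_iff.1 <| (hZ.chainTransPM_iff_isPreconnected.1 h).subset_connectedComponentIn
    (mem_image_of_mem _ hx) (image_mono hZX)

theorem IsSubshift.isChainComponent_chainComponentIn (hX : IsSubshift X) {x : ℤ → A} (hx : x ∈ X) :
    IsChainComponent X (chainComponentIn X x) := by
  refine ⟨hX.isSubshift_chainComponentIn hx, hX.chainComponentIn_subset x, ?_,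
    fun Z hZ hZX h hle => ?_⟩
  · rw [(hX.isSubshift_chainComponentIn hx).chainTransPM_iff_isPreconnected,
      image_toOrbit_chainComponentIn]
    exact isPreconnected_connectedComponentIn
  · exact (h.subset_chainComponentIn hZ hZX (hle (mem_chainComponentIn hx))).antisymm hle

theorem IsChainComponent.eq_chainComponentIn (hX : IsSubshift X) (h : IsChainComponent X Y)
    {x : ℤ → A} (hx : x ∈ Y) : Y = chainComponentIn X x := by
  obtain ⟨hY, hYX, hYtrans, hYmax⟩ := h
  have hcomp := hX.isChainComponent_chainComponentIn (hYX hx)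
  exact (hYmax _ hcomp.1 hcomp.2.1 hcomp.2.2.1 (hYtrans.subset_chainComponentIn hY hYX hx)).symm

theorem IsChainComponent.disjoint_of_ne (hX : IsSubshift X) (hY : IsChainComponent X Y)
    (hZ : IsChainComponent X Z) (hne : Y ≠ Z) : Disjoint Y Z :=
  disjoint_left.2 fun _ hxY hxZ =>
    hne ((hY.eq_chainComponentIn hX hxY).trans (hZ.eq_chainComponentIn hX hxZ).symm)

theorem IsChainComponent.nonempty (hX : IsSubshift X) (hne : X.Nonempty)
    (h : IsChainComponent X Y) : Y.Nonempty := by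
  obtain ⟨x, hx⟩ := hne
  have hcomp := hX.isChainComponent_chainComponentIn hx
  by_contra! hY
  have heq : chainComponentIn X x = Y :=
    h.2.2.2 _ hcomp.1 hcomp.2.1 hcomp.2.2.1 (hY ▸ empty_subset _)
  exact (heq.trans hY).subset (mem_chainComponentIn hx)

theorem IsChainComponent.exists_mapsTo (hX : IsSubshift X) (hf : IsCA f) (hfX : MapsTo f X X)
    (h : IsChainComponent X Y) (hne : Y.Nonempty) : ∃ Z, IsChainComponent X Z ∧ MapsTo f Y Z := by
  obtain ⟨x, hx⟩ := hne
  obtain ⟨hY, hYX, hYtrans, -⟩ := h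
  exact ⟨_, hX.isChainComponent_chainComponentIn (hfX (hYX hx)),
    mapsTo_iff_image_subset.2 <| (hYtrans.image hY hf).subset_chainComponentIn (hY.image hf)
      (mapsTo_iff_image_subset.1 (hfX.mono_left hYX)) (mem_image_of_mem f hx)⟩

end ChainComponents

section OmegaLimits

variable [TopologicalSpace A] {f : (ℤ → A) → (ℤ → A)} {x : ℤ → A} {P Q U : Set (ℤ → A)}

theorem omegaSet_nonempty [CompactSpace A] : (omegaSet f x).Nonempty :=
  exists_clusterPt_of_compactSpace (map (fun t => f^[t] x) atTop)

theorem eventually_mem_of_omegaSet_subset [CompactSpace A] (hU : IsOpen U) (h : omegaSet f x ⊆ U) :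
    ∀ᶠ t in atTop, f^[t] x ∈ U := by
  by_contra hfreq
  obtain ⟨y, hyU, hy⟩ :=
    hU.isClosed_compl.isCompact.exists_mapClusterPt_of_frequently (not_eventually.1 hfreq)
  exact hyU (h hy)

theorem omegaSet_subset_of_eventually_mem (hP : IsClosed P) (h : ∀ᶠ t in atTop, f^[t] x ∈ P) :
    omegaSet f x ⊆ P :=
  fun _ hy => hP.mem_of_mapClusterPt hy h

theorem image_omegaSet [CompactSpace A] [T2Space A] (hf : Continuous f) :
    f '' omegaSet f x = omegaSet f x := by
  refine Subset.antisymm ?_ fun y hy => ?_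
  · rintro _ ⟨y, hy, rfl⟩
    have hfy : MapClusterPt (f y) atTop (f ∘ fun t => f^[t] x) :=
      hy.continuousAt_comp hf.continuousAt
    simp only [comp_def, ← iterate_succ_apply'] at hfy
    exact hfy.of_comp (tendsto_add_atTop_nat 1)
  · obtain ⟨u, hu, huy⟩ := mapClusterPt_iff_ultrafilter.1 hy
    let v := u.map fun t => f^[t - 1] x
    have hv : Tendsto (fun t => f^[t - 1] x) u (nhds v.lim) := v.le_nhds_lim
    have hfv : Tendsto (fun t => f^[t] x) u (nhds (f v.lim)) := by
      refine ((hf.tendsto _).comp hv).congr' (hu (eventually_ge_atTop 1 |>.mono fun t ht => ?_))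
      rw [comp_apply, ← iterate_succ_apply' f, Nat.succ_eq_add_one, Nat.sub_add_cancel ht]
    refine ⟨v.lim, ?_, tendsto_nhds_unique hfv huy⟩
    exact mapClusterPt_iff_ultrafilter.2
      ⟨u.map (· - 1), (tendsto_sub_atTop_nat 1).mono_left hu, hv⟩

theorem omegaSet_apply_of_commute (h : (ℤ → A) ≃ₜ (ℤ → A)) (hc : Function.Commute h f) :
    omegaSet f (h x) = h '' omegaSet f x := by
  ext y
  rw [h.image_eq_preimage_symm, mem_preimage]
  simp only [omegaSet, mem_ofPred_eq, ← (hc.iterate_right _).eq]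
  conv_lhs => rw [← h.apply_symm_apply y]
  exact h.isInducing.mapClusterPt_iff (l := map (fun t => f^[t] x) atTop)

theorem omegaSet_subset_iff_eventually_mem [CompactSpace A] (hU : IsOpen U) (hPU : P ⊆ U)
    (hUQ : Disjoint (closure U) Q) (hx : omegaSet f x ⊆ P ∪ Q) :
    omegaSet f x ⊆ P ↔ ∀ᶠ t in atTop, f^[t] x ∈ U := by
  refine ⟨fun h => eventually_mem_of_omegaSet_subset hU (h.trans hPU), fun h y hy => ?_⟩
  have hyU := omegaSet_subset_of_eventually_mem isClosed_closure
    (h.mono fun _ => (subset_closure ·)) hy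
  exact (hx hy).resolve_right (disjoint_left.1 hUQ hyU)

theorem omegaSet_subset_or_subset [CompactSpace A] [T2Space A] (hf : Continuous f)
    (hP : IsClosed P) (hQ : IsClosed Q) (hPQ : Disjoint P Q) (hfP : MapsTo f P P)
    (hfQ : MapsTo f Q Q) (hx : omegaSet f x ⊆ P ∪ Q) : omegaSet f x ⊆ P ∨ omegaSet f x ⊆ Q := by
  obtain ⟨U, hU, hPU, hUQ⟩ := normal_exists_closure_subset hP hQ.isOpen_compl
    (subset_compl_iff_disjoint_right.2 hPQ)
  let V := (closure U)ᶜ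
  have hV : IsOpen V := isClosed_closure.isOpen_compl
  have hQV : Q ⊆ V := subset_compl_comm.1 hUQ
  have hW : ∀ᶠ t in atTop, f^[t] x ∈ (U ∩ f ⁻¹' U) ∪ (V ∩ f ⁻¹' V) :=
    eventually_mem_of_omegaSet_subset
      ((hU.inter (hU.preimage hf)).union (hV.inter (hV.preimage hf)))
      (hx.trans (union_subset_union (fun y hy => ⟨hPU hy, hPU (hfP hy)⟩)
        fun y hy => ⟨hQV hy, hQV (hfQ hy)⟩))
  have hstep : ∀ᶠ t in atTop, (f^[t + 1] x ∈ U ↔ f^[t] x ∈ U) := by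
    refine hW.mono fun t ht => ?_
    rw [iterate_succ_apply']
    rcases ht with ⟨h, h'⟩ | ⟨h, h'⟩
    · exact iff_of_true h' h
    · exact iff_of_false (fun h'' => h' (subset_closure h'')) fun h'' => h (subset_closure h'')
  have hconst : EventuallyConst {t | f^[t] x ∈ U} atTop := by
    obtain ⟨n, hn⟩ := eventually_atTop.1 hstep
    exact eventuallyConst_atTop_nat.2 ⟨n, fun m hm => propext (hn m hm)⟩
  rcases eventuallyConst_set.1 hconst with h | h
  · exact Or.inl ((omegaSet_subset_iff_eventually_mem hU hPU
      (subset_compl_iff_disjoint_right.1 hUQ) hx).2 h)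
  · have hU_compl : omegaSet f x ⊆ Uᶜ := omegaSet_subset_of_eventually_mem hU.isClosed_compl h
    exact Or.inr fun y hy => (hx hy).resolve_left fun hyP => hU_compl hy (hPU hyP)

end OmegaLimits

section ZeroOneLaw

variable {X : Type*} [TopologicalSpace X]

theorem mem_residual_or_compl_mem_residual [BaireSpace X] {g : X → X} (hg : Continuous g)
    (hg_open : IsOpenMap g)
    (htrans : ∀ U V, IsOpen U → IsOpen V → U.Nonempty → V.Nonempty →
      ∃ n : ℕ, (U ∩ g^[n] ⁻¹' V).Nonempty)
    {D : Set X} (hD : BaireMeasurableSet D) (hgD : MapsTo g D D) :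
    D ∈ residual X ∨ Dᶜ ∈ residual X := by
  obtain ⟨U, hU, hDU⟩ := hD.residualEq_isOpen
  obtain ⟨V, hV, hDV⟩ := hD.compl.residualEq_isOpen
  rcases U.eq_empty_or_nonempty with rfl | hUne
  · exact Or.inr (eventuallyEq_empty.1 hDU)
  rcases V.eq_empty_or_nonempty with rfl | hVne
  · exact Or.inl ((eventuallyEq_empty.1 hDV).mono fun _ => not_not.1)
  obtain ⟨n, hn⟩ := htrans U V hU hV hUne hVne
  have hopen : IsOpen (U ∩ g^[n] ⁻¹' V) := hU.inter (hV.preimage (hg.iterate n))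
  have hDV_n := ((tendsto_residual_of_isOpenMap hg hg_open).iterate n).eventually
    (eventuallyEq_set.1 hDV)
  obtain ⟨x, ⟨hxU, hxV⟩, hxDU, hxDV⟩ := (dense_of_mem_residual
    ((eventuallyEq_set.1 hDU).and hDV_n)).inter_open_nonempty _ hopen hn
  exact (hxDV.2 hxV (hgD.iterate n (hxDU.2 hxU))).elim

end ZeroOneLaw

section GenericLimitSet

variable [TopologicalSpace A] {f : (ℤ → A) → (ℤ → A)} {P Q C : Set (ℤ → A)}

theorem isClosed_genLimitSet : IsClosed (genLimitSet f) :=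
  isClosed_sInter fun _ hC => hC.1

theorem genLimitSet_subset (hC : IsClosed C) (h : realm f C ∈ residual (ℤ → A)) :
    genLimitSet f ⊆ C :=
  sInter_subset_of_mem ⟨hC, h⟩

theorem realm_sInter (f : (ℤ → A) → (ℤ → A)) (S : Set (Set (ℤ → A))) :
    realm f (⋂₀ S) = ⋂ C ∈ S, realm f C := by
  ext x
  simp only [realm, mem_ofPred_eq, subset_sInter_iff, mem_iInter]

theorem realm_genLimitSet_mem_residual [SecondCountableTopology A] :
    realm f (genLimitSet f) ∈ residual (ℤ → A) := by
  obtain ⟨T, hT, hT_countable, hT_eq⟩ := TopologicalSpace.isOpen_biUnion_countable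
    {C | IsClosed C ∧ realm f C ∈ residual (ℤ → A)} compl fun C hC => hC.1.isOpen_compl
  have hgls : genLimitSet f = ⋂₀ T := by
    rw [genLimitSet, sInter_eq_biInter, sInter_eq_biInter, ← compl_inj_iff, compl_iInter₂,
      compl_iInter₂, hT_eq]
  rw [hgls, realm_sInter]
  exact (countable_bInter_mem hT_countable).2 fun C hC => (hT hC).2

theorem image_genLimitSet [CompactSpace A] [T2Space A] [SecondCountableTopology A]
    (hf : Continuous f) : f '' genLimitSet f = genLimitSet f := by
  refine Subset.antisymm (image_subset_iff.2 ?_) ?_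
  · refine genLimitSet_subset (isClosed_genLimitSet.preimage hf) ?_
    filter_upwards [realm_genLimitSet_mem_residual] with x hx
    exact image_subset_iff.1 ((image_omegaSet hf).trans_subset hx)
  · refine genLimitSet_subset (isClosed_genLimitSet.isCompact.image hf).isClosed ?_
    filter_upwards [realm_genLimitSet_mem_residual] with x hx
    exact (image_omegaSet hf).symm.trans_subset (image_mono hx)

theorem genLimitSet_subset_preimage_of_commute [SecondCountableTopology A]
    (h : (ℤ → A) ≃ₜ (ℤ → A)) (hc : Function.Commute h f) :
    genLimitSet f ⊆ h ⁻¹' genLimitSet f := by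
  refine genLimitSet_subset (isClosed_genLimitSet.preimage h.continuous) ?_
  filter_upwards [(tendsto_residual_of_isOpenMap h.continuous h.isOpenMap)
    realm_genLimitSet_mem_residual] with x hx
  exact image_subset_iff.1 ((omegaSet_apply_of_commute h hc).symm.trans_subset hx)

theorem isSubshift_genLimitSet [SecondCountableTopology A] (hf : IsCA f) :
    IsSubshift (genLimitSet f) := by
  have hc : Function.Commute (translate 1) f := hf.commute_shift.symm
  have hc_symm : Function.Commute (translate 1).symm f :=
    hc.inverse_left (translate 1).left_inv (translate 1).right_inv
  refine isSubshift_iff.2 ⟨isClosed_genLimitSet, fun x => ⟨fun hx => ?_, fun hx =>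
    genLimitSet_subset_preimage_of_commute _ hc hx⟩⟩
  exact (translate 1).symm_apply_apply x ▸ genLimitSet_subset_preimage_of_commute _ hc_symm hx

theorem genLimitSet_nonempty [CompactSpace A] [T2Space A] [SecondCountableTopology A] [Nonempty A] :
    (genLimitSet f).Nonempty := by
  obtain ⟨x, hx⟩ := (dense_of_mem_residual (realm_genLimitSet_mem_residual (f := f))).nonempty
  exact omegaSet_nonempty.mono hx

theorem baireMeasurableSet_realm [CompactSpace A] [T2Space A] (hf : Continuous f)
    (hP : IsClosed P) (hQ : IsClosed Q) (hPQ : Disjoint P Q)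
    (hres : realm f (P ∪ Q) ∈ residual (ℤ → A)) : BaireMeasurableSet (realm f P) := by
  obtain ⟨U, hU, hPU, hUQ⟩ := normal_exists_closure_subset hP hQ.isOpen_compl
    (subset_compl_iff_disjoint_right.2 hPQ)
  have hborel : BaireMeasurableSet {x | ∀ᶠ t in atTop, f^[t] x ∈ U} := by
    simp only [eventually_atTop, ofPred_exists, ofPred_forall]
    exact .iUnion fun n => .iInter fun t => .iInter fun _ =>
      (hU.preimage (hf.iterate t)).baireMeasurableSet
  refine hborel.congr (eventuallyEq_set.2 (mem_of_superset hres fun x hx => ?_))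
  exact (omegaSet_subset_iff_eventually_mem hU hPU
    (subset_compl_iff_disjoint_right.1 hUQ) hx).symm

theorem IsSubshift.mapsTo_shift_realm (hP : IsSubshift P) (hf : IsCA f) :
    MapsTo shift (realm f P) (realm f P) := by
  intro x hx
  have h := omegaSet_apply_of_commute (x := x) (translate 1) hf.commute_shift.symm
  exact h.trans_subset ((image_mono hx).trans hP.2.subset)

theorem realm_mem_residual_or_compl_mem_residual [CompactSpace A] [T2Space A] (hf : IsCA f)
    (hP : IsSubshift P) (hQ : IsClosed Q) (hPQ : Disjoint P Q)
    (hres : realm f (P ∪ Q) ∈ residual (ℤ → A)) :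
    realm f P ∈ residual (ℤ → A) ∨ (realm f P)ᶜ ∈ residual (ℤ → A) :=
  mem_residual_or_compl_mem_residual (translate 1).continuous (translate 1).isOpenMap
    (fun _ _ => exists_shift_iterate_inter_nonempty)
    (baireMeasurableSet_realm hf.1 hP.1 hQ hPQ hres) (hP.mapsTo_shift_realm hf)

theorem eq_empty_or_eq_empty_of_genLimitSet_eq_union [CompactSpace A] [T2Space A]
    [SecondCountableTopology A] (hf : IsCA f) (hP : IsSubshift P) (hQ : IsClosed Q)
    (hPQ : Disjoint P Q) (hfP : MapsTo f P P) (hfQ : MapsTo f Q Q) (hgls : genLimitSet f = P ∪ Q) :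
    P = ∅ ∨ Q = ∅ := by
  have hres : realm f (P ∪ Q) ∈ residual (ℤ → A) := hgls ▸ realm_genLimitSet_mem_residual
  rcases realm_mem_residual_or_compl_mem_residual hf hP hQ hPQ hres with h | h
  · have hQP : Q ⊆ P := (hgls ▸ subset_union_right).trans (genLimitSet_subset hP.1 h)
    exact Or.inr (hPQ.symm.eq_bot_of_le hQP)
  · have hresQ : realm f Q ∈ residual (ℤ → A) := by
      filter_upwards [h, hres] with x hxP hx
      exact (omegaSet_subset_or_subset hf.1 hP.1 hQ hPQ hfP hfQ hx).resolve_left hxP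
    have hPQ' : P ⊆ Q := (hgls ▸ subset_union_left).trans (genLimitSet_subset hQ hresQ)
    exact Or.inl (hPQ.eq_bot_of_le hPQ')

end GenericLimitSet

section Permutation

theorem exists_perm_image_eq {α ι : Type*} [Finite ι] {f : α → α} {s : ι → Set α}
    (hne : ∀ i, (s i).Nonempty) (hd : Pairwise (Disjoint on s))
    (hmap : ∀ i, ∃ j, MapsTo f (s i) (s j)) (hsurj : ⋃ i, s i ⊆ f '' ⋃ i, s i) :
    ∃ ρ : Equiv.Perm ι, ∀ i, f '' s i = s (ρ i) := by
  choose r hr using hmap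
  have hpre {j : ι} {y : α} (hy : y ∈ s j) : ∃ i, r i = j ∧ y ∈ f '' s i := by
    obtain ⟨x, hx, rfl⟩ := hsurj (mem_iUnion_of_mem j hy)
    obtain ⟨i, hi⟩ := mem_iUnion.1 hx
    exact ⟨i, hd.eq (not_disjoint_iff.2 ⟨_, hr i hi, hy⟩), mem_image_of_mem f hi⟩
  have hr_surj : Surjective r := fun j =>
    let ⟨_, hy⟩ := hne j
    (hpre hy).imp fun _ h => h.1
  have hr_inj : Injective r := Finite.injective_iff_surjective.2 hr_surj
  refine ⟨.ofBijective r ⟨hr_inj, hr_surj⟩, fun i => (hr i).image_subset.antisymm fun y hy => ?_⟩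
  obtain ⟨i', hi', hy'⟩ := hpre hy
  exact hr_inj hi' ▸ hy'

theorem sameCycle_of_image_eq [TopologicalSpace A] [CompactSpace A] [T2Space A]
    [SecondCountableTopology A] {f : (ℤ → A) → (ℤ → A)} (hf : IsCA f) {ι : Type*} [Finite ι]
    {Y : ι → Set (ℤ → A)} (hY : ∀ i, IsSubshift (Y i)) (hne : ∀ i, (Y i).Nonempty)
    (hd : Pairwise (Disjoint on Y)) (hgls : genLimitSet f = ⋃ i, Y i) {ρ : Equiv.Perm ι}
    (hρ : ∀ i, f '' Y i = Y (ρ i)) (i j : ι) : ρ.SameCycle i j := by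
  let O : Set ι := {l | ρ.SameCycle i l}
  have hO (l : ι) : ρ l ∈ O ↔ l ∈ O := Equiv.Perm.sameCycle_apply_right
  have hsubshift (S : Set ι) : IsSubshift (⋃ l ∈ S, Y l) :=
    .biUnion S.toFinite fun l _ => hY l
  have hmaps (S : Set ι) (hS : ∀ l ∈ S, ρ l ∈ S) : MapsTo f (⋃ l ∈ S, Y l) (⋃ l ∈ S, Y l) :=
    fun x hx => by
      obtain ⟨l, hl, hxl⟩ := mem_iUnion₂.1 hx
      exact mem_biUnion (hS l hl) (hρ l ▸ mem_image_of_mem f hxl)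
  have hdisj : Disjoint (⋃ l ∈ O, Y l) (⋃ l ∈ Oᶜ, Y l) := by
    simp only [disjoint_iUnion_left, disjoint_iUnion_right]
    exact fun m hm l hl => hd fun hlm => hm (hlm ▸ hl)
  have hunion : genLimitSet f = (⋃ l ∈ O, Y l) ∪ ⋃ l ∈ Oᶜ, Y l := by
    rw [hgls, ← biUnion_union, union_compl_self, biUnion_univ]
  by_contra hij
  rcases eq_empty_or_eq_empty_of_genLimitSet_eq_union hf (hsubshift O) (hsubshift Oᶜ).1 hdisj
    (hmaps O fun l => (hO l).2) (hmaps Oᶜ fun l => mt (hO l).1) hunion with h | h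
  · exact ((hne i).mono (subset_biUnion_of_mem (.refl ρ i))).ne_empty h
  · exact ((hne j).mono (subset_biUnion_of_mem hij)).ne_empty h

end Permutation

/-- if `ω̃(f)` has exactly `k` `σ±`-chain components `X_1, …, X_k`, then
there is a cyclic permutation `ρ` of `{1, …, k}` (a permutation with a single orbit) such
that `f(X_i) = X_{ρ(i)}` for each `i`. -/
theorem stmt15 [Fintype A] [Nonempty A] [TopologicalSpace A] [DiscreteTopology A]
    (f : (ℤ → A) → (ℤ → A)) (hf : IsCA f) (k : ℕ) (Xs : Fin k → Set (ℤ → A))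
    (hcomp : ∀ i, IsChainComponent (genLimitSet f) (Xs i))
    (hinj : Function.Injective Xs)
    (hall : ∀ Y : Set (ℤ → A), IsChainComponent (genLimitSet f) Y → ∃ i, Y = Xs i) :
    ∃ ρ : Equiv.Perm (Fin k), (∀ i j : Fin k, ∃ m : ℕ, (ρ ^ m) i = j) ∧
      ∀ i, f '' Xs i = Xs (ρ i) := by
  have hgls := isSubshift_genLimitSet hf
  have hdisj : Pairwise (Disjoint on Xs) := fun i j hij =>
    (hcomp i).disjoint_of_ne hgls (hcomp j) (hinj.ne hij)
  have hne (i : Fin k) : (Xs i).Nonempty := (hcomp i).nonempty hgls genLimitSet_nonempty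
  have hunion : genLimitSet f = ⋃ i, Xs i := by
    refine Subset.antisymm (fun x hx => ?_) (iUnion_subset fun i => (hcomp i).2.1)
    obtain ⟨i, hi⟩ := hall _ (hgls.isChainComponent_chainComponentIn hx)
    exact mem_iUnion_of_mem i (hi ▸ mem_chainComponentIn hx)
  have hmaps (i : Fin k) : ∃ j, MapsTo f (Xs i) (Xs j) := by
    obtain ⟨Z, hZ, hfZ⟩ := (hcomp i).exists_mapsTo hgls hf
      (mapsTo_iff_image_subset.2 (image_genLimitSet hf.1).subset) (hne i)
    obtain ⟨j, rfl⟩ := hall Z hZ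
    exact ⟨j, hfZ⟩
  have hsurj : ⋃ i, Xs i ⊆ f '' ⋃ i, Xs i := by rw [← hunion, image_genLimitSet hf.1]
  obtain ⟨ρ, hρ⟩ := exists_perm_image_eq hne hdisj hmaps hsurj
  exact ⟨ρ, fun i j => (sameCycle_of_image_eq hf (fun i => (hcomp i).1) hne hdisj hunion hρ i
    j).exists_nat_pow_eq, hρ⟩

end Gls
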